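/- Let G be an additive commutative group and R a G-graded commutative ring. Then R is noetherian as a G-graded ring (i.e., every ascending chain of graded ideals of R is eventually stationary) if and only if for every countable family (M_i)_{i∈ℕ} of injective objects of GrMod^G(R), the direct sum ⊕_{i∈ℕ} M_i is an injective object of GrMod^G(R). -/

import Mathlib

/-!
Common vocabulary: internally graded rings and modules, coarsening of gradings,
graded morphisms, and derived notions (injectivity, cogenerators, smallness, ...),
following Rohrer, "Coarsenings, injectives and Hom functors".
-/

open DirectSum

section Defs

variable {G H R : Type} [AddCommGroup G] [AddCommGroup H] [CommRing R]

/-- The `ψ`-coarsening of a `G`-grading: `(ℳ_[ψ])_h = ⨁_{g ∈ ψ⁻¹(h)} ℳ_g`. -/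
def coarsen {M : Type} [AddCommGroup M] (ψ : G →+ H) (ℳ : G → AddSubgroup M) (h : H) :
    AddSubgroup M :=
  ⨆ g ∈ ψ ⁻¹' {h}, ℳ g

/-- `(R, 𝒜)` is a `G`-graded commutative ring: the `𝒜 g` are additive subgroups whose
internal direct sum is `R`, and `𝒜 g * 𝒜 h ⊆ 𝒜 (g + h)`. -/
def IsGradedRing (𝒜 : G → AddSubgroup R) : Prop :=
  (1 : R) ∈ 𝒜 0 ∧
  (∀ {g h : G} {a b : R}, a ∈ 𝒜 g → b ∈ 𝒜 h → a * b ∈ 𝒜 (g + h)) ∧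
  (letI := Classical.decEq G; DirectSum.IsInternal 𝒜)

/-- `(M, ℳ)` is a `G`-graded module over the `G`-graded ring `(R, 𝒜)`. -/
def IsGradedModule {M : Type} [AddCommGroup M] [Module R M]
    (𝒜 : G → AddSubgroup R) (ℳ : G → AddSubgroup M) : Prop :=
  (∀ {g h : G} {r : R} {m : M}, r ∈ 𝒜 g → m ∈ ℳ h → r • m ∈ ℳ (g + h)) ∧
  (letI := Classical.decEq G; DirectSum.IsInternal ℳ)

/-- A morphism of `G`-graded `R`-modules is an `R`-linear map respecting the gradings. -/
def IsGradedHom {M N : Type} [AddCommGroup M] [Module R M]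
    [AddCommGroup N] [Module R N] (ℳ : G → AddSubgroup M) (𝒩 : G → AddSubgroup N)
    (f : M →ₗ[R] N) : Prop :=
  ∀ g : G, ∀ m ∈ ℳ g, f m ∈ 𝒩 g

/-- The grading of a direct sum of graded modules:
`(⨁_i N_i)_g` consists of the elements all of whose components lie in degree `g`. -/
def directSumGrading {ι : Type} {M : ι → Type}
    [∀ i, AddCommGroup (M i)] (ℳ : ∀ i, G → AddSubgroup (M i)) (g : G) :
    AddSubgroup (⨁ i, M i) where
  carrier := {x | ∀ i, x i ∈ ℳ i g}
  zero_mem' := fun i => by simp only [DirectSum.zero_apply, ZeroMemClass.zero_mem]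
  add_mem' := fun {x y} hx hy i => by
    rw [DirectSum.add_apply]; exact add_mem (hx i) (hy i)
  neg_mem' := fun {x} hx i => by
    rw [DFinsupp.neg_apply]; exact neg_mem (hx i)

/-- `(E, ℰ)` is an injective object of the category of `G`-graded `R`-modules:
every graded morphism into `E` extends along every injective graded morphism. -/
def IsInjectiveGradedModule (𝒜 : G → AddSubgroup R) {E : Type} [AddCommGroup E] [Module R E]
    (ℰ : G → AddSubgroup E) : Prop :=
  ∀ (A B : Type) [AddCommGroup A] [Module R A] [AddCommGroup B] [Module R B],
    ∀ (𝒮A : G → AddSubgroup A) (𝒮B : G → AddSubgroup B),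
      IsGradedModule 𝒜 𝒮A → IsGradedModule 𝒜 𝒮B →
      ∀ i : A →ₗ[R] B, Function.Injective i → IsGradedHom 𝒮A 𝒮B i →
      ∀ f : A →ₗ[R] E, IsGradedHom 𝒮A ℰ f →
      ∃ g : B →ₗ[R] E, IsGradedHom 𝒮B ℰ g ∧ g ∘ₗ i = f

/-- `(M, ℳ)` is a cogenerator of the category of `G`-graded `R`-modules: every nonzero
graded morphism is detected by a graded morphism into `M`. -/
def IsCogenerator (𝒜 : G → AddSubgroup R) {M : Type} [AddCommGroup M] [Module R M]
    (ℳ : G → AddSubgroup M) : Prop :=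
  ∀ (N N' : Type) [AddCommGroup N] [Module R N] [AddCommGroup N'] [Module R N'],
    ∀ (𝒩 : G → AddSubgroup N) (𝒩' : G → AddSubgroup N'),
      IsGradedModule 𝒜 𝒩 → IsGradedModule 𝒜 𝒩' →
      ∀ u : N →ₗ[R] N', IsGradedHom 𝒩 𝒩' u → u ≠ 0 →
      ∃ v : N' →ₗ[R] M, IsGradedHom 𝒩' ℳ v ∧ v ∘ₗ u ≠ 0

/-- `M` is a small graded module: every graded morphism from `M` into a direct sum of
graded modules factors through a finite sub-sum. -/
def IsSmall (𝒜 : G → AddSubgroup R) {M : Type} [AddCommGroup M] [Module R M]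
    (ℳ : G → AddSubgroup M) : Prop :=
  ∀ (ι : Type) (N : ι → Type) [∀ i, AddCommGroup (N i)] [∀ i, Module R (N i)],
    ∀ (𝒩 : ∀ i, G → AddSubgroup (N i)), (∀ i, IsGradedModule 𝒜 (𝒩 i)) →
      ∀ f : M →ₗ[R] ⨁ i, N i, IsGradedHom ℳ (directSumGrading 𝒩) f →
        ∃ s : Finset ι, ∀ (m : M) (i : ι), i ∉ s → f m i = 0

/-- `M` is `P`-small: every graded morphism from `M` into a direct sum of copies of `P`
factors through a finite sub-sum. -/
def IsSmallWrt {P : Type} [AddCommGroup P] [Module R P] (𝒬 : G → AddSubgroup P)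
    {M : Type} [AddCommGroup M] [Module R M] (ℳ : G → AddSubgroup M) : Prop :=
  ∀ (ι : Type) (f : M →ₗ[R] ⨁ (_ : ι), P),
    IsGradedHom ℳ (directSumGrading fun (_ : ι) => 𝒬) f →
      ∃ s : Finset ι, ∀ (m : M) (i : ι), i ∉ s → f m i = 0

/-- A `G`-graded ring is steady if all small graded modules over it are finitely generated. -/
def IsSteady (𝒜 : G → AddSubgroup R) : Prop :=
  ∀ (M : Type) [AddCommGroup M] [Module R M], ∀ ℳ : G → AddSubgroup M,
    IsGradedModule 𝒜 ℳ → IsSmall 𝒜 ℳ → Module.Finite R M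

/-- A graded ideal of the `G`-graded ring `(R, 𝒜)`: `I = ⨁_g (I ∩ R_g)`. -/
def IsGradedIdeal (𝒜 : G → AddSubgroup R) (I : Ideal R) : Prop :=
  I.toAddSubgroup = ⨆ g : G, I.toAddSubgroup ⊓ 𝒜 g

/-- A simple `G`-graded `R`-module: nonzero, and its only graded submodules are `0` and
the whole module. -/
def IsSimpleGradedModule (𝒜 : G → AddSubgroup R) {S : Type} [AddCommGroup S] [Module R S]
    (𝒮 : G → AddSubgroup S) : Prop :=
  IsGradedModule 𝒜 𝒮 ∧ Nontrivial S ∧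
    ∀ P : Submodule R S, (P.toAddSubgroup = ⨆ g : G, P.toAddSubgroup ⊓ 𝒮 g) →
      P = ⊥ ∨ P = ⊤

/-- The subgroup of `M →ₗ[R] N` consisting of the graded morphisms `M → N(g)`, i.e. the
degree-`g` component of the graded Hom module `⨁HOM(M, N)`. -/
def gradedHomSubgroup {M N : Type} [AddCommGroup M] [Module R M] [AddCommGroup N] [Module R N]
    (ℳ : G → AddSubgroup M) (𝒩 : G → AddSubgroup N) (g : G) : AddSubgroup (M →ₗ[R] N) where
  carrier := {u | ∀ g' : G, ∀ m ∈ ℳ g', u m ∈ 𝒩 (g + g')}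
  zero_mem' := fun g' m _ => by simp only [LinearMap.zero_apply, ZeroMemClass.zero_mem]
  add_mem' := fun {u v} hu hv g' m hm => by
    rw [LinearMap.add_apply]; exact add_mem (hu g' m hm) (hv g' m hm)
  neg_mem' := fun {u} hu g' m hm => by
    rw [LinearMap.neg_apply]; exact neg_mem (hu g' m hm)

end Defs

section Aux

variable {G R : Type} [AddCommGroup G] [CommRing R]

/-- `p` is the family of projections onto the components of the grading `ℳ`. -/
structure IsPr {M : Type} [AddCommGroup M] (ℳ : G → AddSubgroup M) (p : G → M →+ M) : Prop where
  mem : ∀ g x, p g x ∈ ℳ g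
  same : ∀ g x, x ∈ ℳ g → p g x = x
  ne : ∀ g h x, x ∈ ℳ g → g ≠ h → p h x = 0
  sum : ∀ x, ∃ s : Finset G, x = ∑ g ∈ s, p g x

lemma exists_isPr {M : Type} [AddCommGroup M] (ℳ : G → AddSubgroup M)
    (h : letI := Classical.decEq G; DirectSum.IsInternal ℳ) :
    ∃ p : G → M →+ M, IsPr ℳ p := by
  classical
  have h' : DirectSum.IsInternal ℳ := by convert h
  letI := h'.chooseDecomposition
  refine ⟨fun g => (ℳ g).subtype.comp ((DFinsupp.evalAddMonoidHom g).comp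
    (DirectSum.decomposeAddEquiv ℳ).toAddMonoidHom), ?_, ?_, ?_, ?_⟩
  · intro g x
    exact (DirectSum.decompose ℳ x g).2
  · intro g x hx
    exact DirectSum.decompose_of_mem_same ℳ hx
  · intro g h x hx hne
    exact DirectSum.decompose_of_mem_ne ℳ hx hne
  · intro x
    exact ⟨_, (DirectSum.sum_support_decompose ℳ x).symm⟩

lemma IsPr.isInternal {M : Type} [AddCommGroup M] {ℳ : G → AddSubgroup M} {p : G → M →+ M}
    (h : IsPr ℳ p) : letI := Classical.decEq G; DirectSum.IsInternal ℳ := by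
  letI := Classical.decEq G
  change Function.Bijective _
  constructor
  · have key : ∀ (g : G) (x : ⨁ i, ℳ i),
        p g (DirectSum.coeAddMonoidHom ℳ x) = ((x g : ℳ g) : M) := by
      intro g x
      induction x using DirectSum.induction_on with
      | zero => simp
      | of i x =>
        rw [DirectSum.coeAddMonoidHom_of]
        by_cases hi : i = g
        · subst hi
          rw [h.same _ _ x.2, DirectSum.of_eq_same]
        · rw [h.ne _ _ _ x.2 hi, DirectSum.of_eq_of_ne _ _ _ (Ne.symm hi)]
          rfl
      | add x y hx hy => rw [map_add, map_add, hx, hy, DirectSum.add_apply]; rfl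
    intro x y hxy
    refine DFinsupp.ext fun g => Subtype.ext ?_
    have := key g x
    rw [hxy, key g y] at this
    exact this.symm
  · intro x
    obtain ⟨s, hs⟩ := h.sum x
    refine ⟨∑ g ∈ s, DirectSum.of (fun g => ℳ g) g ⟨p g x, h.mem g x⟩, ?_⟩
    rw [map_sum]
    conv_rhs => rw [hs]
    refine Finset.sum_congr rfl fun g _ => ?_
    rw [DirectSum.coeAddMonoidHom_of]

lemma IsPr.comm {M N : Type} [AddCommGroup M] [AddCommGroup N] {ℳ : G → AddSubgroup M}
    {𝒩 : G → AddSubgroup N} {p : G → M →+ M} {q : G → N →+ N}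
    (hp : IsPr ℳ p) (hq : IsPr 𝒩 q) (σ : G → G) (hσ : Function.Injective σ) (f : M →+ N)
    (hf : ∀ g x, x ∈ ℳ g → f x ∈ 𝒩 (σ g)) (g : G) (x : M) : q (σ g) (f x) = f (p g x) := by
  obtain ⟨s, hs⟩ := hp.sum x
  have h1 : ∀ k, q (σ g) (f (p k x)) = f (p g (p k x)) := by
    intro k
    by_cases hk : k = g
    · subst hk
      rw [hq.same _ _ (hf _ _ (hp.mem _ _)), hp.same _ _ (hp.mem _ _)]
    · rw [hq.ne _ _ _ (hf _ _ (hp.mem _ _)) (fun e => hk (hσ e)),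
        hp.ne _ _ _ (hp.mem _ _) hk, map_zero]
  rw [hs]
  simp only [map_sum, h1]

lemma IsPr.ext {M N : Type} [AddCommGroup M] [AddCommGroup N] {ℳ : G → AddSubgroup M}
    {p : G → M →+ M} (hp : IsPr ℳ p) (f f' : M →+ N)
    (hf : ∀ g x, x ∈ ℳ g → f x = f' x) (x : M) : f x = f' x := by
  obtain ⟨s, hs⟩ := hp.sum x
  rw [hs]
  simp only [map_sum, hf _ _ (hp.mem _ _)]

/-- Shift of a grading restricted to a submodule closed under projections. -/
lemma IsPr.restrict {M : Type} [AddCommGroup M] [Module R M] {ℳ : G → AddSubgroup M}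
    {p : G → M →+ M} (hp : IsPr ℳ p) (P : Submodule R M) (hP : ∀ x ∈ P, ∀ g, p g x ∈ P) (k : G) :
    ∃ q : G → P →+ P, IsPr (fun g => (ℳ (g - k)).comap P.subtype.toAddMonoidHom) q ∧
      ∀ g x, (q g x : M) = p (g - k) x := by
  refine ⟨fun g => ((p (g - k)).comp P.subtype.toAddMonoidHom).codRestrict P
    (fun x => hP _ x.2 _), ⟨?_, ?_, ?_, ?_⟩, fun _ _ => rfl⟩
  · intro g x
    exact hp.mem _ _
  · intro g x hx
    exact Subtype.ext (hp.same _ _ hx)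
  · intro g h x hx hne
    exact Subtype.ext (hp.ne _ _ _ hx (fun e => hne (sub_left_injective e)))
  · intro x
    obtain ⟨s, hs⟩ := hp.sum (x : M)
    refine ⟨s.map (Equiv.addRight k).toEmbedding, Subtype.ext ?_⟩
    rw [Finset.sum_map, AddSubmonoidClass.coe_finsetSum]
    conv_lhs => rw [hs]
    refine Finset.sum_congr rfl fun g _ => ?_
    change _ = p ((g + k) - k) (x : M)
    rw [add_sub_cancel_right]

lemma isGradedIdeal_iff {𝒜 : G → AddSubgroup R} {p : G → R →+ R} (hp : IsPr 𝒜 p) (I : Ideal R) :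
    IsGradedIdeal 𝒜 I ↔ ∀ x ∈ I, ∀ g, p g x ∈ I := by
  constructor
  · intro h x hx g
    have hx' : x ∈ ⨆ g : G, I.toAddSubgroup ⊓ 𝒜 g := by
      rw [← h]; exact hx
    induction hx' using AddSubgroup.iSup_induction' with
    | hp k y hy =>
      by_cases hk : k = g
      · subst hk
        rw [hp.same _ _ hy.2]; exact hy.1
      · rw [hp.ne _ _ _ hy.2 hk]; exact I.zero_mem
    | h1 => rw [map_zero]; exact I.zero_mem
    | hadd y z hy hz iy iz =>
      rw [map_add]
      rw [← h] at hy hz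
      exact I.add_mem (iy hy) (iz hz)
  · intro h
    refine le_antisymm ?_ (iSup_le fun g => inf_le_left)
    intro x hx
    obtain ⟨s, hs⟩ := hp.sum x
    rw [hs]
    exact sum_mem fun g _ => AddSubgroup.mem_iSup_of_mem g ⟨h x hx g, hp.mem g x⟩

lemma IsPr.smul_comm {𝒜 : G → AddSubgroup R} {p : G → R →+ R} (hp : IsPr 𝒜 p)
    {M : Type} [AddCommGroup M] [Module R M] {ℳ : G → AddSubgroup M} (hM : IsGradedModule 𝒜 ℳ)
    {q : G → M →+ M} (hq : IsPr ℳ q) {k : G} {b : M} (hb : b ∈ ℳ k) (g : G) (c : R) :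
    q g (c • b) = p (g - k) c • b := by
  have := hp.comm hq (· + k) (add_left_injective k)
    (LinearMap.toSpanSingleton R M b).toAddMonoidHom (fun g x hx => hM.1 hx hb) (g - k) c
  simpa using this

/-- Graded version of Baer's condition. -/
def GBaer (𝒜 : G → AddSubgroup R) {E : Type} [AddCommGroup E] [Module R E]
    (ℰ : G → AddSubgroup E) : Prop :=
  ∀ (I : Ideal R), IsGradedIdeal 𝒜 I → ∀ (g : G) (φ : I →ₗ[R] E),
    (∀ h (r : I), (r : R) ∈ 𝒜 h → φ r ∈ ℰ (h + g)) → ∃ e ∈ ℰ g, ∀ r : I, φ r = (r : R) • e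

lemma IsPr.gmod {𝒜 : G → AddSubgroup R}
    {M : Type} [AddCommGroup M] [Module R M] {ℳ : G → AddSubgroup M} (hM : IsGradedModule 𝒜 ℳ)
    {p : G → M →+ M} (hp : IsPr ℳ p) (P : Submodule R M) (hP : ∀ x ∈ P, ∀ g, p g x ∈ P) (k : G) :
    IsGradedModule 𝒜 (fun g => (ℳ (g - k)).comap P.subtype.toAddMonoidHom) := by
  obtain ⟨q, hq, -⟩ := hp.restrict P hP k
  refine ⟨?_, hq.isInternal⟩
  intro g h r m hr hm
  have := hM.1 hr hm
  rw [← add_sub_assoc] at this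
  exact this

lemma IsGradedRing.gmod {𝒜 : G → AddSubgroup R} (h : IsGradedRing 𝒜) :
    IsGradedModule 𝒜 𝒜 := ⟨h.2.1, h.2.2⟩

lemma gbaer_of_injective {𝒜 : G → AddSubgroup R} (h𝒜 : IsGradedRing 𝒜)
    {E : Type} [AddCommGroup E] [Module R E] (ℰ : G → AddSubgroup E)
    (hE : IsInjectiveGradedModule 𝒜 ℰ) : GBaer 𝒜 ℰ := by
  intro I hI g φ hφ
  obtain ⟨p, hp⟩ := exists_isPr 𝒜 h𝒜.2.2
  rw [isGradedIdeal_iff hp] at hI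
  have h1 := IsPr.gmod h𝒜.gmod hp I hI g
  have h2 := IsPr.gmod h𝒜.gmod hp ⊤ (fun _ _ _ => trivial) g
  obtain ⟨u, hu, hu'⟩ := hE _ _ _ _ h1 h2 (Submodule.inclusion le_top)
    (Submodule.inclusion_injective _) (fun g m hm => hm) φ (by
      intro h m hm
      have := hφ _ _ hm
      rwa [sub_add_cancel] at this)
  refine ⟨u ⟨1, trivial⟩, hu _ _ ?_, ?_⟩
  · change (1 : R) ∈ 𝒜 (g - g)
    rw [sub_self]; exact h𝒜.1
  · intro r
    have h3 : (Submodule.inclusion le_top r : (⊤ : Ideal R)) =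
        (r : R) • (⟨1, trivial⟩ : (⊤ : Ideal R)) := Subtype.ext (mul_one (r : R)).symm
    rw [← hu', ← map_smul, ← h3]
    rfl

lemma injective_of_gbaer {𝒜 : G → AddSubgroup R} (h𝒜 : IsGradedRing 𝒜)
    {E : Type} [AddCommGroup E] [Module R E] (ℰ : G → AddSubgroup E)
    (hsm : ∀ (g h : G) (r : R) (m : E), r ∈ 𝒜 g → m ∈ ℰ h → r • m ∈ ℰ (g + h))
    (hE : GBaer 𝒜 ℰ) : IsInjectiveGradedModule 𝒜 ℰ := by
  intro A B _ _ _ _ 𝒮A 𝒮B hA hB i hi hig f hf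
  obtain ⟨p, hp⟩ := exists_isPr 𝒜 h𝒜.2.2
  obtain ⟨a, ha⟩ := exists_isPr 𝒮A hA.2
  obtain ⟨q, hq⟩ := exists_isPr 𝒮B hB.2
  let S : Set (B →ₗ.[R] E) := {u | (∀ x ∈ u.domain, ∀ g, q g x ∈ u.domain) ∧
    ∀ g (x : u.domain), (x : B) ∈ 𝒮B g → u x ∈ ℰ g}
  let e := LinearEquiv.ofInjective i hi
  let u₀ : B →ₗ.[R] E := ⟨LinearMap.range i, f ∘ₗ e.symm.toLinearMap⟩
  have hu₀ : ∀ (y : A) (z : u₀.domain), (z : B) = i y → u₀ z = f y := by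
    intro y z hz
    have : z = e y := Subtype.ext hz
    rw [this]
    change f (e.symm (e y)) = f y
    rw [LinearEquiv.symm_apply_apply]
  have hu₀S : u₀ ∈ S := by
    constructor
    · rintro _ ⟨y, rfl⟩ g
      refine ⟨a g y, ?_⟩
      exact (ha.comm hq id Function.injective_id i.toAddMonoidHom hig g y).symm
    · rintro g ⟨_, y, rfl⟩ hx
      rw [hu₀ y _ rfl]
      have h1 : i (a g y) = i y :=
        (ha.comm hq id Function.injective_id i.toAddMonoidHom hig g y).symm.trans
          (hq.same _ _ hx)
      rw [← hi h1]
      exact hf _ _ (ha.mem _ _)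
  obtain ⟨u, hu₀u, hu⟩ := zorn_le_nonempty₀ S (by
    intro c hcS hc y hy
    have hd : DirectedOn (· ≤ ·) c := hc.directedOn
    refine ⟨LinearPMap.sSup c hd, ⟨?_, ?_⟩, fun z hz => LinearPMap.le_sSup hd hz⟩
    · intro x hx g
      rw [LinearPMap.mem_domain_sSup_iff ⟨y, hy⟩] at hx ⊢
      obtain ⟨l, hl, hx⟩ := hx
      exact ⟨l, hl, (hcS hl).1 x hx g⟩
    · rintro g ⟨x, hx⟩ hxg
      have hx' := hx
      rw [LinearPMap.mem_domain_sSup_iff ⟨y, hy⟩] at hx'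
      obtain ⟨l, hl, hx'⟩ := hx'
      have := LinearPMap.sSup_apply hd hl ⟨x, hx'⟩
      rw [this]
      exact (hcS hl).2 g _ hxg) u₀ hu₀S
  have htop : u.domain = ⊤ := by
    rw [eq_top_iff]
    intro x _
    obtain ⟨s, hs⟩ := hq.sum x
    rw [hs]
    refine sum_mem fun k _ => ?_
    have hb := hq.mem k x
    generalize q k x = b at hb
    let I : Ideal R := u.domain.comap (LinearMap.toSpanSingleton R B b)
    let φ : I →ₗ[R] E := u.toFun ∘ₗ
      ((LinearMap.toSpanSingleton R B b).restrict (p := I) (q := u.domain) (fun r hr => hr))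
    have hφ : ∀ (r : I) (z : u.domain), (z : B) = (r : R) • b → u z = φ r := by
      intro r z hz
      have : z = ((LinearMap.toSpanSingleton R B b).restrict (p := I) (q := u.domain)
        (fun r hr => hr)) r := Subtype.ext hz
      rw [this]; rfl
    obtain ⟨v, hv, hφv⟩ := hE I (by
      rw [isGradedIdeal_iff hp]
      intro r hr g
      change p g r • b ∈ u.domain
      have := hp.smul_comm hB hq hb (g + k) r
      rw [add_sub_cancel_right] at this
      rw [← this]
      exact hu.1.1 _ hr _) k φ (by
      intro h r hr
      rw [← hφ r ⟨(r : R) • b, r.2⟩ rfl]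
      exact hu.1.2 _ _ (hB.1 hr hb))
    have hz : ∀ c : R, c • b = 0 → (RingHom.id R) c • v = 0 := by
      intro c hc
      have hcI : c ∈ I := by
        change c • b ∈ u.domain
        rw [hc]; exact u.domain.zero_mem
      have h1 := hφ ⟨c, hcI⟩ 0 hc.symm
      rw [hφv, LinearPMap.map_zero] at h1
      exact h1.symm
    let w : B →ₗ.[R] E := LinearPMap.mkSpanSingleton' b v hz
    have hcomp : ∀ (x : u.domain) (y : w.domain), (x : B) = y → u x = w y := by
      rintro x ⟨y, hy⟩ hxy
      obtain ⟨c, rfl⟩ := Submodule.mem_span_singleton.1 hy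
      have hcI : c ∈ I := by
        change c • b ∈ u.domain
        rw [← show (x : B) = c • b from hxy]; exact x.2
      rw [LinearPMap.mkSpanSingleton'_apply, hφ ⟨c, hcI⟩ x hxy, hφv]
      rfl
    have hle : u ≤ u.sup w hcomp := LinearPMap.left_le_sup _ _ _
    have hS : u.sup w hcomp ∈ S := by
      have hdec : ∀ x ∈ u.domain ⊔ w.domain, ∃ y ∈ u.domain, ∃ c : R, x = y + c • b := by
        intro x hx
        obtain ⟨y, hy, z, hz, rfl⟩ := Submodule.mem_sup.1 hx
        obtain ⟨c, rfl⟩ := Submodule.mem_span_singleton.1 hz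
        exact ⟨y, hy, c, rfl⟩
      have hmemw : ∀ c : R, c • b ∈ w.domain := fun c =>
        Submodule.mem_span_singleton.2 ⟨c, rfl⟩
      constructor
      · intro x hx g
        obtain ⟨y, hy, c, rfl⟩ := hdec x hx
        rw [map_add, hp.smul_comm hB hq hb]
        exact Submodule.add_mem_sup (hu.1.1 _ hy _) (hmemw _)
      · rintro g ⟨x, hx⟩ hxg
        obtain ⟨y, hy, c, rfl⟩ := hdec x hx
        have h1 := hq.same _ _ hxg
        rw [map_add, hp.smul_comm hB hq hb] at h1
        rw [LinearPMap.sup_apply hcomp ⟨q g y, hu.1.1 _ hy _⟩ ⟨p (g - k) c • b, hmemw _⟩ _ h1,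
          LinearPMap.mkSpanSingleton'_apply]
        refine add_mem (hu.1.2 _ _ (hq.mem _ _)) ?_
        have := hsm _ _ _ _ (hp.mem (g - k) c) hv
        rwa [sub_add_cancel] at this
    have h2 := (hu.2 hS hle).1
    refine h2 (Submodule.mem_sup_right (Submodule.mem_span_singleton_self b))
  refine ⟨u.toFun ∘ₗ (LinearEquiv.ofTop _ htop).symm.toLinearMap, ?_, ?_⟩
  · intro g m hm
    exact hu.1.2 g _ hm
  · ext y
    have := hu₀u.2 (x := ⟨i y, y, rfl⟩) (y := (LinearEquiv.ofTop _ htop).symm (i y)) rfl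
    rw [hu₀ y _ rfl] at this
    exact this.symm

/-- Underlying group of the cofree graded module. -/
def Cof (G Q : Type) [AddCommGroup Q] : Type := G →₀ Q

noncomputable instance (G Q : Type) [AddCommGroup Q] : AddCommGroup (Cof G Q) :=
  inferInstanceAs (AddCommGroup (G →₀ Q))

lemma exists_action {𝒜 : G → AddSubgroup R} (h𝒜 : IsGradedRing 𝒜)
    (Q : Type) [AddCommGroup Q] [Module R Q] :
    ∃ ρ : R →+* AddMonoid.End (G →₀ Q), ∀ h, ∀ a ∈ 𝒜 h, ∀ g q,
      ρ a (Finsupp.single g q) = Finsupp.single (h + g) (a • q) := by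
  letI := Classical.decEq G
  haveI : SetLike.GradedMonoid 𝒜 := { one_mem := h𝒜.1, mul_mem := fun _ _ _ _ ha hb => h𝒜.2.1 ha hb }
  have hint : DirectSum.IsInternal 𝒜 := h𝒜.2.2
  letI : DirectSum.Decomposition 𝒜 := hint.chooseDecomposition
  letI : GradedRing 𝒜 := { }
  let t : G → R → ((G →₀ Q) →+ (G →₀ Q)) := fun h a =>
    (Finsupp.mapDomain.addMonoidHom (h + ·)).comp
      (Finsupp.mapRange.addMonoidHom (DistribSMul.toAddMonoidHom Q a))
  have ht : ∀ h a g q, t h a (Finsupp.single g q) = Finsupp.single (h + g) (a • q) := by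
    intro h a g q
    simp [t, Finsupp.mapDomain_single]
  let T : ∀ h : G, 𝒜 h →+ AddMonoid.End (G →₀ Q) := fun h => AddMonoidHom.mk'
    (fun a => t h (a : R)) (by
      intro a b
      refine Finsupp.addHom_ext fun g q => ?_
      change t h ((a : R) + (b : R)) _ = t h a _ + t h b _
      rw [ht, ht, ht, add_smul, Finsupp.single_add])
  have hT : ∀ h (a : 𝒜 h) g q, T h a (Finsupp.single g q) =
      Finsupp.single (h + g) ((a : R) • q) := fun h a g q => ht h a g q
  let ρ' : (⨁ h, 𝒜 h) →+* AddMonoid.End (G →₀ Q) := DirectSum.toSemiring T (by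
      refine Finsupp.addHom_ext fun g q => ?_
      change t 0 (1 : R) _ = Finsupp.single g q
      rw [ht, zero_add, one_smul]) (by
      intro i j a b
      refine Finsupp.addHom_ext fun g q => ?_
      change t (i + j) ((a : R) * (b : R)) _ = t i a (t j b _)
      rw [ht, ht, ht, mul_smul, add_assoc])
  refine ⟨ρ'.comp (DirectSum.decomposeRingEquiv 𝒜).toRingHom, ?_⟩
  intro h a ha g q
  change ρ' (DirectSum.decompose 𝒜 a) _ = _
  rw [DirectSum.decompose_of_mem 𝒜 ha]
  have h1 : ρ' (DirectSum.of (fun i => 𝒜 i) h ⟨a, ha⟩) = T h ⟨a, ha⟩ :=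
    DirectSum.toAddMonoid_of T h ⟨a, ha⟩
  rw [h1]
  exact hT h ⟨a, ha⟩ g q

lemma exists_cofree {𝒜 : G → AddSubgroup R} (h𝒜 : IsGradedRing 𝒜)
    (Q : Type) [AddCommGroup Q] [Module R Q] :
    ∃ (F : Type) (_ : AddCommGroup F) (_ : Module R F) (ℱ : G → AddSubgroup F) (ε : F →ₗ[R] Q),
      IsGradedModule 𝒜 ℱ ∧ (∀ g, ∀ x ∈ ℱ g, ε x = 0 → x = 0) ∧
      ∀ (M : Type) [AddCommGroup M] [Module R M] (ℳ : G → AddSubgroup M), IsGradedModule 𝒜 ℳ →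
        ∀ u : M →ₗ[R] Q, ∃ w : M →ₗ[R] F, IsGradedHom ℳ ℱ w ∧ ε ∘ₗ w = u := by
  classical
  obtain ⟨pR, hpR⟩ := exists_isPr 𝒜 h𝒜.2.2
  obtain ⟨ρ, hρ⟩ := exists_action h𝒜 Q
  letI m : Module R (Cof G Q) := Module.compHom (G →₀ Q) ρ
  let sg : G → Q →+ Cof G Q := fun g => Finsupp.singleAddHom g
  have hsmul : ∀ h, ∀ a ∈ 𝒜 h, ∀ g q, a • sg g q = sg (h + g) (a • q) := hρ
  have hsgext : ∀ {N : Type} [AddCommGroup N] (f f' : Cof G Q →+ N),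
      (∀ g q, f (sg g q) = f' (sg g q)) → f = f' := by
    intro N _ f f' h
    exact Finsupp.addHom_ext (M := Q) h
  let ℱ : G → AddSubgroup (Cof G Q) := fun g => (sg g).range
  let ev : G → Cof G Q →+ Q := fun g => Finsupp.applyAddHom g
  have hev : ∀ g h q, ev h (sg g q) = if g = h then q else 0 := by
    intro g h q
    exact Finsupp.single_apply
  let ε₀ : Cof G Q →+ Q := Finsupp.liftAddHom (fun _ => AddMonoidHom.id Q)
  have hε₀ : ∀ g q, ε₀ (sg g q) = q := by
    intro g q
    exact Finsupp.liftAddHom_apply_single _ _ _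
  have hF : IsPr ℱ (fun g => (sg g).comp (ev g)) := by
    constructor
    · intro g x
      exact ⟨_, rfl⟩
    · rintro g _ ⟨q, rfl⟩
      simp [hev]
    · rintro g h _ ⟨q, rfl⟩ hne
      simp [hev, hne]
    · intro x
      exact ⟨Finsupp.support (M := Q) x, (Finsupp.sum_single (M := Q) x).symm⟩
  have hlin : ∀ (r : R) (x : Cof G Q), ε₀ (r • x) = r • ε₀ x := by
    intro r x
    have h1 : ∀ k, ∀ a ∈ 𝒜 k, ∀ x, ε₀ (a • x) = a • ε₀ x := by
      intro k a ha x
      have := hsgext (ε₀.comp (DistribSMul.toAddMonoidHom (Cof G Q) a))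
        ((DistribSMul.toAddMonoidHom Q a).comp ε₀) (by
          intro g q
          simp [hsmul k a ha, hε₀])
      exact DFunLike.congr_fun this x
    exact hpR.ext (ε₀.comp (LinearMap.toSpanSingleton R (Cof G Q) x).toAddMonoidHom)
      (LinearMap.toSpanSingleton R Q (ε₀ x)).toAddMonoidHom
      (fun g a ha => h1 g a ha x) r
  refine ⟨Cof G Q, inferInstance, m, ℱ, { ε₀ with map_smul' := hlin }, ⟨?_, hF.isInternal⟩,
    ?_, ?_⟩
  · rintro g h r _ hr ⟨q, rfl⟩
    rw [hsmul g r hr]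
    exact ⟨_, rfl⟩
  · rintro g _ ⟨q, rfl⟩ h0
    have : q = 0 := (hε₀ g q).symm.trans h0
    rw [this, map_zero]
  · intro M _ _ ℳ hM u
    obtain ⟨p, hp⟩ := exists_isPr ℳ hM.2
    have hfin : ∀ x, {g | p g x ≠ 0}.Finite := by
      intro x
      obtain ⟨s, hs⟩ := hp.sum x
      refine s.finite_toSet.subset ?_
      intro g hg
      by_contra hgs
      apply hg
      rw [hs, map_sum]
      refine Finset.sum_eq_zero fun k hk => hp.ne _ _ _ (hp.mem k x) ?_
      rintro rfl
      exact hgs hk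
    let w₀ : M →+ Cof G Q := AddMonoidHom.mk' (fun x =>
      (Finsupp.ofSupportFinite (fun g => u (p g x)) ((hfin x).subset (by
        intro g hg h0
        apply hg
        change u (p g x) = 0
        rw [h0, map_zero])) : G →₀ Q)) (by
        intro x y
        refine Finsupp.ext (M := Q) fun g => ?_
        change u (p g (x + y)) = u (p g x) + u (p g y)
        rw [map_add, map_add])
    have hw₀ : ∀ g, ∀ x ∈ ℳ g, w₀ x = sg g (u x) := by
      intro g x hx
      refine Finsupp.ext (M := Q) fun h => ?_
      change u (p h x) = ev h (sg g (u x))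
      rw [hev]
      split_ifs with e
      · subst e
        rw [hp.same _ _ hx]
      · rw [hp.ne _ _ _ hx e, map_zero]
    have hwlin : ∀ (r : R) (x : M), w₀ (r • x) = r • w₀ x := by
      intro r x
      have h1 : ∀ k, ∀ a ∈ 𝒜 k, ∀ x, w₀ (a • x) = a • w₀ x := by
        intro k a ha x
        refine hp.ext (w₀.comp (DistribSMul.toAddMonoidHom M a))
          ((DistribSMul.toAddMonoidHom (Cof G Q) a).comp w₀) ?_ x
        intro g x hx
        change w₀ (a • x) = a • w₀ x
        rw [hw₀ _ _ (hM.1 ha hx), hw₀ _ _ hx, hsmul k a ha, map_smul]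
      exact hpR.ext (w₀.comp (LinearMap.toSpanSingleton R M x).toAddMonoidHom)
        (LinearMap.toSpanSingleton R (Cof G Q) (w₀ x)).toAddMonoidHom
        (fun g a ha => h1 g a ha x) r
    refine ⟨{ w₀ with map_smul' := hwlin }, ?_, ?_⟩
    · intro g x hx
      exact ⟨u x, (hw₀ g x hx).symm⟩
    · ext x
      refine hp.ext (ε₀.comp w₀) u.toAddMonoidHom ?_ x
      intro g x hx
      change ε₀ (w₀ x) = u x
      rw [hw₀ _ _ hx, hε₀]

lemma exists_injective_embedding (M : Type) [AddCommGroup M] [Module R M] :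
    ∃ (Q : Type) (_ : AddCommGroup Q) (_ : Module R Q) (u : M →ₗ[R] Q),
      Module.Injective R Q ∧ Function.Injective u := by
  let X := ModuleCat.of R M
  let J := CategoryTheory.Injective.under X
  have hJ : CategoryTheory.Injective (ModuleCat.of R J) :=
    inferInstanceAs (CategoryTheory.Injective J)
  refine ⟨J, inferInstance, inferInstance, (CategoryTheory.Injective.ι X).hom,
    Module.injective_module_of_injective_object R J, ?_⟩
  exact (ModuleCat.mono_iff_injective _).1 inferInstance

lemma exists_cog {𝒜 : G → AddSubgroup R} (h𝒜 : IsGradedRing 𝒜) (I : Ideal R)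
    (hI : IsGradedIdeal 𝒜 I) :
    ∃ (F : Type) (_ : AddCommGroup F) (_ : Module R F) (ℱ : G → AddSubgroup F) (w : R →ₗ[R] F),
      IsGradedModule 𝒜 ℱ ∧ IsInjectiveGradedModule 𝒜 ℱ ∧ IsGradedHom 𝒜 ℱ w ∧
        ∀ r, w r = 0 ↔ r ∈ I := by
  obtain ⟨Q, _, _, u, hQ, hu⟩ := exists_injective_embedding (R := R) (R ⧸ I)
  obtain ⟨F, _, _, ℱ, ε, hF, hε, huniv⟩ := exists_cofree h𝒜 Q
  obtain ⟨w, hw, hwu⟩ := huniv R 𝒜 h𝒜.gmod (u ∘ₗ I.mkQ)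
  obtain ⟨p, hp⟩ := exists_isPr 𝒜 h𝒜.2.2
  rw [isGradedIdeal_iff hp] at hI
  have hwu' : ∀ r, ε (w r) = u (I.mkQ r) := fun r => DFunLike.congr_fun hwu r
  refine ⟨F, inferInstance, inferInstance, ℱ, w, hF, ?_, hw, ?_⟩
  · intro A B _ _ _ _ 𝒮A 𝒮B hA hB i hi hig f hf
    obtain ⟨v, hv⟩ := hQ.out i hi (ε ∘ₗ f)
    obtain ⟨t, ht, htv⟩ := huniv B 𝒮B hB v
    refine ⟨t, ht, ?_⟩
    obtain ⟨a, ha⟩ := exists_isPr 𝒮A hA.2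
    ext x
    refine ha.ext (t ∘ₗ i).toAddMonoidHom f.toAddMonoidHom ?_ x
    intro g x hx
    change t (i x) = f x
    rw [← sub_eq_zero]
    refine hε g _ (sub_mem (ht _ _ (hig _ _ hx)) (hf _ _ hx)) ?_
    have h1 : ε (t (i x)) = v (i x) := DFunLike.congr_fun htv (i x)
    rw [map_sub, h1, hv, LinearMap.comp_apply, sub_self]
  · intro r
    constructor
    · intro h
      have h1 := hwu' r
      rw [h, map_zero] at h1
      have h2 : I.mkQ r = 0 := hu (by rw [← h1, map_zero])
      exact (Submodule.Quotient.mk_eq_zero I).1 h2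
    · intro hr
      obtain ⟨s, hs⟩ := hp.sum r
      rw [hs, map_sum]
      refine Finset.sum_eq_zero fun g _ => hε g _ (hw _ _ (hp.mem _ _)) ?_
      rw [hwu']
      have : I.mkQ (p g r) = 0 := (Submodule.Quotient.mk_eq_zero I).2 (hI r hr g)
      rw [this, map_zero]

lemma forward {𝒜 : G → AddSubgroup R} (h𝒜 : IsGradedRing 𝒜)
    (hN : ∀ I : ℕ → Ideal R, (∀ n, IsGradedIdeal 𝒜 (I n)) → Monotone I →
        ∃ n, ∀ m, n ≤ m → I m = I n)
    (N : ℕ → Type) [∀ i, AddCommGroup (N i)] [∀ i, Module R (N i)]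
    (𝒩 : ∀ i, G → AddSubgroup (N i)) (hg : ∀ i, IsGradedModule 𝒜 (𝒩 i))
    (hinj : ∀ i, IsInjectiveGradedModule 𝒜 (𝒩 i)) :
    IsInjectiveGradedModule 𝒜 (directSumGrading 𝒩) := by
  classical
  obtain ⟨p, hp⟩ := exists_isPr 𝒜 h𝒜.2.2
  refine injective_of_gbaer h𝒜 _ (fun g h r m hr hm i => (hg i).1 hr (hm i)) ?_
  intro J hJ g φ hφ
  have hJ' := (isGradedIdeal_iff hp J).1 hJ
  let φc : ∀ i, J →ₗ[R] N i := fun i => DirectSum.component R ℕ N i ∘ₗ φ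
  have hφc : ∀ i h (r : J), (r : R) ∈ 𝒜 h → φc i r ∈ 𝒩 i (h + g) :=
    fun i h r hr => hφ h r hr i
  let K : ℕ → Submodule R J := fun n => ⨅ i ≥ n, LinearMap.ker (φc i)
  have hK : ∀ n (r : J), r ∈ K n ↔ ∀ i ≥ n, φ r i = 0 := by
    intro n r
    simp only [K, Submodule.mem_iInf, LinearMap.mem_ker]
    rfl
  obtain ⟨n, hn⟩ := hN (fun n => (K n).map J.subtype) (by
    intro n
    rw [isGradedIdeal_iff hp]
    rintro _ ⟨r, hr, rfl⟩ h
    refine ⟨⟨p h r, hJ' r r.2 h⟩, ?_, rfl⟩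
    have hr' := (hK n r).1 hr
    refine (hK n _).2 fun i hi => ?_
    obtain ⟨q, hq⟩ := exists_isPr (𝒩 i) (hg i).2
    obtain ⟨pJ, hpJ, hpJ'⟩ := hp.restrict J hJ' 0
    have := hpJ.comm hq (· + g) (add_left_injective g) (φc i).toAddMonoidHom (by
      intro k x hx
      refine hφc i k x ?_
      have hx' : (x : R) ∈ 𝒜 (k - 0) := hx
      rwa [sub_zero] at hx') h r
    have h2 : (⟨p h r, hJ' r r.2 h⟩ : J) = pJ h r := Subtype.ext (by rw [hpJ', sub_zero])
    rw [h2]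
    refine Eq.trans this.symm ?_
    have h3 : (φc i).toAddMonoidHom r = 0 := hr' i hi
    rw [h3, map_zero]) (by
    intro a b hab
    refine Submodule.map_mono fun r hr => ?_
    exact (hK b r).2 fun i hi => (hK a r).1 hr i (hab.trans hi))
  have hzero : ∀ (r : J) i, n ≤ i → φ r i = 0 := by
    intro r
    have : ∃ m, ∀ i ≥ m, φ r i = 0 := by
      refine ⟨(DFinsupp.support (φ r)).sup id + 1, fun i hi => ?_⟩
      by_contra h
      have := Finset.le_sup (f := id) (DFinsupp.mem_support_iff.2 h)
      simp only [id] at this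
      omega
    obtain ⟨m, hm⟩ := this
    have h1 : (r : R) ∈ (K (max n m)).map J.subtype :=
      ⟨r, (hK _ r).2 fun i hi => hm i ((le_max_right _ _).trans hi), rfl⟩
    have h4 : (K (max n m)).map J.subtype = (K n).map J.subtype := hn _ (le_max_left _ _)
    rw [h4] at h1
    obtain ⟨r', hr', e⟩ := h1
    have : r' = r := Subtype.ext e
    subst this
    exact (hK n _).1 hr'
  choose e he he' using fun i => gbaer_of_injective h𝒜 (𝒩 i) (hinj i) J hJ g (φc i) (hφc i)
  let E : ⨁ i, N i := DFinsupp.mk (Finset.range n) (fun i => e i)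
  have hE : ∀ i, E i = if i < n then e i else 0 := by
    intro i
    simp [E, DFinsupp.mk_apply]
  refine ⟨E, ?_, ?_⟩
  · intro i
    rw [hE]
    split_ifs
    · exact he i
    · exact zero_mem _
  · intro r
    refine DFinsupp.ext fun i => ?_
    change φ r i = (r : R) • E i
    rw [hE]
    split_ifs with hi
    · exact he' i r
    · rw [smul_zero]
      exact hzero r i (not_lt.1 hi)

lemma backward {𝒜 : G → AddSubgroup R} (h𝒜 : IsGradedRing 𝒜)
    (H : ∀ (N : ℕ → Type) [∀ i, AddCommGroup (N i)] [∀ i, Module R (N i)],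
        ∀ 𝒩 : ∀ i, G → AddSubgroup (N i), (∀ i, IsGradedModule 𝒜 (𝒩 i)) →
          (∀ i, IsInjectiveGradedModule 𝒜 (𝒩 i)) →
            IsInjectiveGradedModule 𝒜 (directSumGrading 𝒩))
    (I : ℕ → Ideal R) (hI : ∀ n, IsGradedIdeal 𝒜 (I n)) (hmono : Monotone I) :
    ∃ n, ∀ m, n ≤ m → I m = I n := by
  classical
  obtain ⟨p, hp⟩ := exists_isPr 𝒜 h𝒜.2.2
  choose F i1 i2 ℱ w hF hinj hw hker using fun n => exists_cog h𝒜 (I n) (hI n)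
  let J : Ideal R := ⨆ n, I n
  have hmem : ∀ r, r ∈ J ↔ ∃ n, r ∈ I n := fun r =>
    Submodule.mem_iSup_of_directed I hmono.directed_le
  have hJ : ∀ r ∈ J, ∀ g, p g r ∈ J := by
    intro r hr g
    obtain ⟨n, hn⟩ := (hmem r).1 hr
    exact (hmem _).2 ⟨n, (isGradedIdeal_iff hp _).1 (hI n) r hn g⟩
  have hex : ∀ r : J, ∃ x : ⨁ n, F n, ∀ n, x n = w n r := by
    intro r
    obtain ⟨k, hk⟩ := (hmem r).1 r.2
    refine ⟨DFinsupp.mk (Finset.range k) (fun n => w n r), fun n => ?_⟩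
    rw [DFinsupp.mk_apply]
    split_ifs with h
    · rfl
    · symm
      rw [hker]
      refine hmono ?_ hk
      simpa using h
  choose f hf using hex
  let f' : J →ₗ[R] ⨁ n, F n :=
    { toFun := f
      map_add' := by
        intro x y
        refine DFinsupp.ext fun n => ?_
        rw [DirectSum.add_apply, hf, hf, hf, ← map_add]
        rfl
      map_smul' := by
        intro r x
        refine DFinsupp.ext fun n => ?_
        change f (r • x) n = r • f x n
        rw [hf, hf, ← map_smul]
        rfl }
  obtain ⟨t, -, ht⟩ := H F ℱ hF hinj J R _ 𝒜 (IsPr.gmod h𝒜.gmod hp J hJ 0) h𝒜.gmod J.subtype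
    J.subtype_injective (by
      intro g x hx
      have hx' : (x : R) ∈ 𝒜 (g - 0) := hx
      rwa [sub_zero] at hx') f' (by
      intro g x hx n
      have hx' : (x : R) ∈ 𝒜 (g - 0) := hx
      rw [sub_zero] at hx'
      change f x n ∈ _
      rw [hf]
      exact hw n g _ hx')
  obtain ⟨n, hn⟩ : ∃ n, t 1 n = 0 := by
    obtain ⟨n, hn⟩ := Infinite.exists_notMem_finset (DFinsupp.support (t 1))
    exact ⟨n, DFinsupp.notMem_support_iff.1 hn⟩
  refine ⟨n, fun m hm => le_antisymm ?_ (hmono hm)⟩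
  intro r hr
  have hrJ : r ∈ J := (hmem r).2 ⟨m, hr⟩
  rw [← hker, ← hf ⟨r, hrJ⟩ n]
  have h1 : t r = f ⟨r, hrJ⟩ := DFunLike.congr_fun ht (⟨r, hrJ⟩ : J)
  rw [← h1, ← mul_one r, ← smul_eq_mul, map_smul]
  change r • t 1 n = 0
  rw [hn, smul_zero]

end Aux

/-- **Statement 10** (graded Chase/Bass–Papp criterion): a `G`-graded commutative ring is
noetherian (ascending chains of graded ideals are stationary) if and only if countable
direct sums of injective graded modules are injective. -/
theorem noetherian_iff_countable_directSum_of_injectives_injective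
    {G R : Type} [AddCommGroup G] [CommRing R]
    (𝒜 : G → AddSubgroup R) (h𝒜 : IsGradedRing 𝒜) :
    (∀ I : ℕ → Ideal R, (∀ n, IsGradedIdeal 𝒜 (I n)) → Monotone I →
        ∃ n, ∀ m, n ≤ m → I m = I n) ↔
      (∀ (N : ℕ → Type) [∀ i, AddCommGroup (N i)] [∀ i, Module R (N i)],
        ∀ 𝒩 : ∀ i, G → AddSubgroup (N i), (∀ i, IsGradedModule 𝒜 (𝒩 i)) →
          (∀ i, IsInjectiveGradedModule 𝒜 (𝒩 i)) →
            IsInjectiveGradedModule 𝒜 (directSumGrading 𝒩)) := by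
  exact ⟨fun hN N _ _ 𝒩 hg hinj => forward h𝒜 hN N 𝒩 hg hinj,
    fun H I hI hmono => backward h𝒜 H I hI hmono⟩
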